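/- Let G = (V, E) be a finite simple loopless graph that is biconnected (connected and G − v is connected for every vertex v). If G contains |E| − 1 Hamiltonian paths whose indicator vectors e_H ∈ ℝ^E are affinely independent, then G is resistance nonnegative (RN). -/

import Mathlib

open scoped Classical

namespace RCurv

variable {V : Type*} [Fintype V] [DecidableEq V]

/-- `T` is (the edge set of) a spanning tree of `G`. -/
def IsSpanningTree (G : SimpleGraph V) (T : Finset (Sym2 V)) : Prop :=
  (T : Set (Sym2 V)) ⊆ G.edgeSet ∧ (SimpleGraph.fromEdgeSet (T : Set (Sym2 V))).IsTree

/-- The finite set of all spanning trees of `G`. -/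
noncomputable def spanningTrees (G : SimpleGraph V) : Finset (Finset (Sym2 V)) :=
  Finset.univ.filter fun T => IsSpanningTree G T

/-- The relative resistance `r_e(c)` of an edge `e`. -/
noncomputable def relRes (G : SimpleGraph V) (c : Sym2 V → ℝ) (e : Sym2 V) : ℝ :=
  (∑ T ∈ (spanningTrees G).filter (fun T => e ∈ T), ∏ t ∈ T, c t) /
    (∑ T ∈ spanningTrees G, ∏ t ∈ T, c t)

/-- The resistance curvature `p_v(c)` of a vertex `v`. -/
noncomputable def curv (G : SimpleGraph V) (c : Sym2 V → ℝ) (v : V) : ℝ :=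
  1 - (1 / 2) * ∑ u ∈ G.neighborFinset v, relRes G c s(u, v)

/-- `G` is resistance nonnegative. -/
def IsRN (G : SimpleGraph V) : Prop :=
  ∃ c : Sym2 V → ℝ, (∀ e ∈ G.edgeSet, 0 < c e) ∧ ∀ v : V, 0 ≤ curv G c v

/-- `G` is resistance positive. -/
def IsRP (G : SimpleGraph V) : Prop :=
  ∃ c : Sym2 V → ℝ, (∀ e ∈ G.edgeSet, 0 < c e) ∧ ∀ v : V, 0 < curv G c v

/-- The indicator vector of a finite edge set, as a vector in `ℝ^{Sym2 V}`. -/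
noncomputable def indVec (T : Finset (Sym2 V)) : Sym2 V → ℝ := fun e => if e ∈ T then 1 else 0

/-- The spanning tree polytope `P(G)`. -/
noncomputable def stPolytope (G : SimpleGraph V) : Set (Sym2 V → ℝ) :=
  convexHull ℝ {x | ∃ T ∈ spanningTrees G, x = indVec T}

/-- `M` is a matching of `G`. -/
def IsMatching' (G : SimpleGraph V) (M : Finset (Sym2 V)) : Prop :=
  (M : Set (Sym2 V)) ⊆ G.edgeSet ∧ ∀ v : V, (M.filter fun e => v ∈ e).card ≤ 1

/-- The matching polytope `M(G)`. -/
noncomputable def matchingPolytope (G : SimpleGraph V) : Set (Sym2 V → ℝ) :=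
  convexHull ℝ {x | ∃ M : Finset (Sym2 V), IsMatching' G M ∧ x = indVec M}

/-- A Hamiltonian path: a spanning tree in which every vertex has degree at most `2`. -/
def IsHamPath (G : SimpleGraph V) (H : Finset (Sym2 V)) : Prop :=
  IsSpanningTree G H ∧ ∀ v : V, (H.filter fun e => v ∈ e).card ≤ 2

end RCurv

/-!
Up to scaling, the possible vectors of relative resistances are exactly the positive combinations
of the indicator vectors of all spanning trees: minimizing the coercive function
`∑ exp (z i) - l i * z i` over the space of possible exponents turns arbitrary positive coefficients
into products of edge weights. Hence it suffices to find such a combination which, after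
normalization to total coefficient `1`, has degree at most `2` at every vertex.

Adding a large multiple of the sum of the given Hamiltonian paths achieves this at each vertex where
some path ends. At the remaining vertices the degree excess over `2` is a linear functional
vanishing on all the given paths, which span a hyperplane in `ℝ^E`, so these functionals are
proportional. By biconnectedness each vertex is a leaf of some spanning tree; if the excess at one
of the remaining vertices is positive, adding a multiple of such a tree makes it zero there, hence
zero at all of them.
-/

namespace RCurv

open Filter Module

section Convex

variable {ι : Type*}

lemma exists_mul_abs_sub_le_exp_sub_mul {l : ℝ} (hl : 0 < l) :
    ∃ k, ∀ t, l * |t| - k ≤ Real.exp t - l * t := by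
  -- `a * (1 + t - log a)` is the tangent line to `exp` of slope `a = 2 * l`.
  have htangent (t : ℝ) : 2 * l * (1 + t - Real.log (2 * l)) ≤ Real.exp t := by
    have hexp := Real.add_one_le_exp (t - Real.log (2 * l))
    rw [Real.exp_sub, Real.exp_log (by positivity), le_div_iff₀ (by positivity)] at hexp
    linarith
  refine ⟨|2 * l * (1 - Real.log (2 * l))|, fun t => ?_⟩
  rcases abs_cases t with ⟨ht, -⟩ | ⟨ht, -⟩
  · have hk := neg_abs_le (2 * l * (1 - Real.log (2 * l)))
    rw [ht]
    linarith [htangent t]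
  · have hk := abs_nonneg (2 * l * (1 - Real.log (2 * l)))
    rw [ht]
    linarith [Real.exp_pos t]

variable [Fintype ι]

lemma tendsto_sum_exp_sub_mul_cocompact {l : ι → ℝ} (hl : ∀ i, 0 < l i) :
    Tendsto (fun z : ι → ℝ => ∑ i, (Real.exp (z i) - l i * z i)) (cocompact _) atTop := by
  choose k hk using fun i => exists_mul_abs_sub_le_exp_sub_mul (hl i)
  have hbound (i : ι) (z : ι → ℝ) :
      l i * |z i| - ∑ j, k j ≤ ∑ j, (Real.exp (z j) - l j * z j) := by
    calc l i * |z i| - ∑ j, k j ≤ ∑ j, l j * |z j| - ∑ j, k j := by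
          gcongr
          exact Finset.single_le_sum (f := fun j => l j * |z j|)
            (fun j _ => mul_nonneg (hl j).le (abs_nonneg _)) (Finset.mem_univ i)
      _ = ∑ j, (l j * |z j| - k j) := Finset.sum_sub_distrib ..|>.symm
      _ ≤ _ := Finset.sum_le_sum fun j _ => hk j (z j)
  rw [← coprodᵢ_cocompact, Filter.coprodᵢ, tendsto_iSup]
  intro i
  refine tendsto_atTop_mono (hbound i) (tendsto_atTop_add_const_right _ _ ?_)
  exact (tendsto_norm_cocompact_atTop.comp tendsto_comap).const_mul_atTop (hl i)

lemma exists_mem_forall_sum_exp_mul_eq (R : Submodule ℝ (ι → ℝ)) {l : ι → ℝ}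
    (hl : ∀ i, 0 < l i) :
    ∃ z ∈ R, ∀ y ∈ R, ∑ i, Real.exp (z i) * y i = ∑ i, l i * y i := by
  have hcont : Continuous fun z : ι → ℝ => ∑ i, (Real.exp (z i) - l i * z i) := by fun_prop
  obtain ⟨z, hzR, hzmin⟩ := hcont.continuousOn.exists_isMinOn' R.closed_of_finiteDimensional
    R.zero_mem (((tendsto_sum_exp_sub_mul_cocompact hl).eventually_ge_atTop _).filter_mono
      inf_le_left)
  refine ⟨z, hzR, fun y hy => ?_⟩
  have hderiv : HasDerivAt
      (fun t : ℝ => ∑ i, (Real.exp (z i + t * y i) - l i * (z i + t * y i)))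
      (∑ i, (Real.exp (z i) * y i - l i * y i)) 0 := by
    refine HasDerivAt.fun_sum fun i _ => ?_
    have hline := ((hasDerivAt_id (0 : ℝ)).mul_const (y i)).const_add (z i)
    simpa using! hline.exp.sub (hline.const_mul (l i))
  have hlocal : IsLocalMin
      (fun t : ℝ => ∑ i, (Real.exp (z i + t * y i) - l i * (z i + t * y i))) 0 :=
    Eventually.of_forall fun t => by
      simpa using hzmin (R.add_mem hzR (R.smul_mem t hy))
  rw [← sub_eq_zero, ← Finset.sum_sub_distrib]
  exact hlocal.hasDerivAt_eq_zero hderiv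

lemma exists_sum_exp_dotProduct_smul_eq {σ : Type*} [Fintype σ] (a : ι → σ → ℝ) {l : ι → ℝ}
    (hl : ∀ i, 0 < l i) :
    ∃ θ : σ → ℝ, ∑ i, Real.exp (a i ⬝ᵥ θ) • a i = ∑ i, l i • a i := by
  obtain ⟨_, ⟨θ, rfl⟩, hθ⟩ :=
    exists_mem_forall_sum_exp_mul_eq (LinearMap.range (Matrix.of a).mulVecLin) hl
  refine ⟨θ, funext fun s => ?_⟩
  simpa [Matrix.mulVec] using hθ _ ⟨Pi.single s 1, rfl⟩

end Convex

lemma exists_nonneg_forall_add_mul_nonpos {ι : Type*} [Finite ι] {a b : ι → ℝ}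
    (hb : ∀ i, b i ≤ 0) (ha : ∀ i, b i = 0 → a i ≤ 0) :
    ∃ t, 0 ≤ t ∧ ∀ i, a i + t * b i ≤ 0 := by
  have hlarge : ∀ᶠ t in atTop, ∀ i, a i + t * b i ≤ 0 := by
    refine eventually_all.mpr fun i => ?_
    rcases (hb i).eq_or_lt with hzero | hneg
    · exact .of_forall fun t => by simpa [hzero] using ha i hzero
    · exact (tendsto_atBot_add_const_left _ _
        (tendsto_id.atTop_mul_const_of_neg hneg)).eventually_le_atBot 0
  exact ((eventually_ge_atTop 0).and hlarge).exists

section LinearAlgebra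

variable {K M ι : Type*} [Field K] [AddCommGroup M] [Module K M]

lemma linearIndependent_of_affineIndependent {g : ι → M} (hg : AffineIndependent K g)
    {φ : Dual K M} {r : K} (hr : r ≠ 0) (hφ : ∀ i, φ (g i) = r) : LinearIndependent K g := by
  rw [linearIndependent_iff']
  intro s w hw
  refine affineIndependent_iff.mp hg s w ?_ hw
  have hsum := congrArg φ hw
  simp only [map_sum, map_smul, hφ, smul_eq_mul, ← Finset.sum_mul, map_zero] at hsum
  exact (mul_eq_zero.mp hsum).resolve_right hr

lemma inf_ker_le_ker_of_finrank_le [Fintype ι] {W : Submodule K M} [FiniteDimensional K W]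
    {g : ι → M} (hg : LinearIndependent K g) (hgW : ∀ i, g i ∈ W)
    (hcard : finrank K W ≤ Fintype.card ι + 1) {φ χ : Dual K M}
    (hφ : ∀ i, φ (g i) = 0) (hχ : ∀ i, χ (g i) = 0) {y : M} (hyW : y ∈ W) (hy : φ y ≠ 0) :
    W ⊓ LinearMap.ker φ ≤ LinearMap.ker χ := by
  have hspan : Submodule.span K (Set.range g) ≤ W ⊓ LinearMap.ker φ :=
    Submodule.span_le.mpr (Set.range_subset_iff.mpr fun i => ⟨hgW i, hφ i⟩)
  have hlt : W ⊓ LinearMap.ker φ < W := inf_le_left.lt_of_not_ge fun h => hy (h hyW).2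
  have hrank := Submodule.finrank_lt_finrank_of_lt hlt
  have : FiniteDimensional K ↥(W ⊓ LinearMap.ker φ) :=
    Submodule.finiteDimensional_of_le inf_le_left
  rw [← Submodule.eq_of_le_of_finrank_le hspan (by rw [finrank_span_eq_card hg]; omega)]
  exact Submodule.span_le.mpr (Set.range_subset_iff.mpr hχ)

end LinearAlgebra

variable {V : Type*} {G : SimpleGraph V}

lemma isSpanningTree_edgeFinset {T : SimpleGraph V} [Fintype T.edgeSet] (hT : T.IsTree)
    (hTG : T ≤ G) : IsSpanningTree G T.edgeFinset := by
  simpa [IsSpanningTree, hT] using hTG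

section Fintype

variable [Fintype V]

lemma mem_spanningTrees {T : Finset (Sym2 V)} : T ∈ spanningTrees G ↔ IsSpanningTree G T := by
  simp [spanningTrees]

lemma IsSpanningTree.card_add_one {T : Finset (Sym2 V)} (hT : IsSpanningTree G T) :
    T.card + 1 = Fintype.card V := by
  rw [← hT.2.card_edgeFinset]
  congr 2
  ext e
  simpa using fun he => G.not_isDiag_of_mem_edgeSet (hT.1 he)

lemma card_sub_one_pos [Nontrivial V] : (0 : ℝ) < Fintype.card V - 1 :=
  sub_pos.mpr (by exact_mod_cast Fintype.one_lt_card)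

/-- The degree of the edge vector `x` at `v`, minus twice its total mass normalized so that
spanning trees have mass `1`: its sign compares the degree with `2` without normalizing `x`. For
`|V| = 1` the normalization is the junk value `2 / 0 = 0`. -/
noncomputable def degreeExcess (G : SimpleGraph V) (v : V) : Dual ℝ (Sym2 V → ℝ) :=
  ∑ u ∈ G.neighborFinset v, LinearMap.proj s(u, v) -
    (2 / ((Fintype.card V : ℝ) - 1)) • ∑ e, LinearMap.proj e

lemma degreeExcess_apply (v : V) (x : Sym2 V → ℝ) :
    degreeExcess G v x =
      ∑ u ∈ G.neighborFinset v, x s(u, v) - 2 / ((Fintype.card V : ℝ) - 1) * ∑ e, x e := by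
  simp [degreeExcess]

end Fintype

variable [DecidableEq V]

/-- The space `ℝ^E`, as the subspace of `ℝ^{Sym2 V}` spanned by the edges of `G`. -/
def edgeSpace (G : SimpleGraph V) : Submodule ℝ (Sym2 V → ℝ) :=
  Submodule.span ℝ (Set.range fun e : G.edgeSet => Pi.single e.1 1)

lemma indVec_mem_edgeSpace {T : Finset (Sym2 V)} (hT : (T : Set (Sym2 V)) ⊆ G.edgeSet) :
    indVec T ∈ edgeSpace G := by
  have hsum : indVec T = ∑ e ∈ T, Pi.single e 1 := by
    ext e
    simp [indVec, Finset.sum_apply, Pi.single_apply]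
  rw [hsum]
  exact Submodule.sum_mem _ fun e he => Submodule.subset_span ⟨⟨e, hT he⟩, rfl⟩

lemma exists_isSpanningTree_card_filter_le_one [Finite V] {v w : V}
    (hvw : G.Adj v w) (hv : (G.induce ({v}ᶜ : Set V)).Connected) :
    ∃ T, IsSpanningTree G T ∧ (T.filter fun e => v ∈ e).card ≤ 1 := by
  have := Fintype.ofFinite V
  let H : SimpleGraph V := (G.induce ({v}ᶜ : Set V)).spanningCoe ⊔ SimpleGraph.edge v w
  have hHG : H ≤ G :=
    sup_le (G.spanningCoe_induce_le _) ((SimpleGraph.edge_le_iff ..).mpr (Or.inr hvw))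
  have hreach (a : V) : H.Reachable a w := by
    by_cases ha : a = v
    · subst ha
      exact SimpleGraph.Adj.reachable (Or.inr (by simp [SimpleGraph.edge_adj, hvw.ne]))
    · exact ((hv.preconnected ⟨a, ha⟩ ⟨w, hvw.ne'⟩).map
        (SimpleGraph.Embedding.spanningCoe _).toHom).mono le_sup_left
  have hH : H.Connected :=
    (SimpleGraph.connected_iff_exists_forall_reachable H).mpr ⟨w, fun a => (hreach a).symm⟩
  obtain ⟨T, hTH, hT⟩ := hH.exists_isTree_le
  refine ⟨T.edgeFinset, isSpanningTree_edgeFinset hT (hTH.trans hHG), ?_⟩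
  suffices T.edgeFinset.filter (fun e => v ∈ e) ⊆ {s(v, w)} from
    (Finset.card_le_card this).trans (Finset.card_singleton _).le
  intro e he
  obtain ⟨heT, u, rfl⟩ := Finset.mem_filter.mp he
  have hvu : H.Adj v u := hTH (SimpleGraph.mem_edgeFinset.mp heT)
  obtain ⟨huw, -⟩ : u = w ∧ v ≠ u := by simpa [H, SimpleGraph.edge_adj, hvw.ne] using hvu
  simp [huw]

lemma IsSpanningTree.sum_indVec [Fintype V] {T : Finset (Sym2 V)} (hT : IsSpanningTree G T) :
    ∑ e, indVec T e = (Fintype.card V : ℝ) - 1 := by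
  have hcard : ∑ e, indVec T e = T.card := by simp [indVec]
  rw [hcard, ← hT.card_add_one]
  push_cast
  ring

lemma linearIndependent_indVec [Finite V] [Nontrivial V] {ι : Type*} {f : ι → Finset (Sym2 V)}
    (hf : ∀ i, IsSpanningTree G (f i)) (hind : AffineIndependent ℝ fun i => indVec (f i)) :
    LinearIndependent ℝ fun i => indVec (f i) := by
  have := Fintype.ofFinite V
  exact linearIndependent_of_affineIndependent hind (φ := ∑ e, LinearMap.proj e)
    card_sub_one_pos.ne' fun i => by simpa using (hf i).sum_indVec

variable [Fintype V]

lemma finrank_edgeSpace_le : finrank ℝ (edgeSpace G) ≤ G.edgeFinset.card :=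
  (finrank_range_le_card _).trans_eq G.edgeFinset_card.symm

lemma sum_neighborFinset_indVec {T : Finset (Sym2 V)} (hT : (T : Set (Sym2 V)) ⊆ G.edgeSet)
    (v : V) : ∑ u ∈ G.neighborFinset v, indVec T s(u, v) = (T.filter fun e => v ∈ e).card := by
  simp only [indVec, Finset.sum_boole, Nat.cast_inj]
  refine Finset.card_bij (fun u _ => s(u, v)) (fun u hu => ?_)
    (fun _ _ _ _ => Sym2.congr_left.mp) fun e he => ?_
  · exact Finset.mem_filter.mpr ⟨(Finset.mem_filter.mp hu).2, Sym2.mem_mk_right u v⟩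
  · obtain ⟨heT, u, rfl⟩ := Finset.mem_filter.mp he
    refine ⟨u, Finset.mem_filter.mpr ⟨?_, Sym2.eq_swap ▸ heT⟩, Sym2.eq_swap⟩
    exact (G.mem_neighborFinset v u).mpr (hT heT)

/-- The cone of positive combinations of the indicator vectors of all spanning trees: the relative
interior of the cone over the spanning tree polytope. -/
def treeCone (G : SimpleGraph V) : Set (Sym2 V → ℝ) :=
  {x | ∃ μ : Finset (Sym2 V) → ℝ, (∀ T ∈ spanningTrees G, 0 < μ T) ∧
    x = ∑ T ∈ spanningTrees G, μ T • indVec T}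

lemma treeCone_subset_edgeSpace : treeCone G ⊆ edgeSpace G := by
  rintro _ ⟨μ, -, rfl⟩
  exact Submodule.sum_mem _ fun T hT =>
    Submodule.smul_mem _ _ (indVec_mem_edgeSpace (mem_spanningTrees.mp hT).1)

lemma sum_indVec_mem_treeCone : ∑ T ∈ spanningTrees G, indVec T ∈ treeCone G :=
  ⟨1, fun _ _ => one_pos, by simp⟩

lemma add_smul_indVec_mem_treeCone {x : Sym2 V → ℝ} (hx : x ∈ treeCone G) {t : ℝ} (ht : 0 ≤ t)
    {T : Finset (Sym2 V)} (hT : IsSpanningTree G T) : x + t • indVec T ∈ treeCone G := by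
  obtain ⟨μ, hμ, rfl⟩ := hx
  refine ⟨fun T' => μ T' + if T' = T then t else 0, fun T' hT' => ?_, ?_⟩
  · exact add_pos_of_pos_of_nonneg (hμ T' hT') (by split_ifs <;> [exact ht; exact le_rfl])
  · simp [add_smul, Finset.sum_add_distrib, ite_smul, mem_spanningTrees, hT]

lemma add_smul_sum_indVec_mem_treeCone {ι : Type*} {x : Sym2 V → ℝ} (hx : x ∈ treeCone G) {t : ℝ}
    (ht : 0 ≤ t) {f : ι → Finset (Sym2 V)} (hf : ∀ i, IsSpanningTree G (f i)) (s : Finset ι) :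
    x + t • ∑ i ∈ s, indVec (f i) ∈ treeCone G := by
  induction s using Finset.induction_on with
  | empty => simpa using hx
  | insert i s hi ih =>
    rw [Finset.sum_insert hi, smul_add, add_left_comm, add_comm]
    exact add_smul_indVec_mem_treeCone ih ht (hf i)

lemma exists_pos_eq_sum_prod_smul_indVec {x : Sym2 V → ℝ} (hx : x ∈ treeCone G) :
    ∃ c : Sym2 V → ℝ, (∀ e, 0 < c e) ∧
      x = ∑ T ∈ spanningTrees G, (∏ t ∈ T, c t) • indVec T := by
  obtain ⟨μ, hμ, rfl⟩ := hx
  obtain ⟨θ, hθ⟩ := exists_sum_exp_dotProduct_smul_eq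
    (fun T : spanningTrees G => indVec T.1) fun T => hμ T.1 T.2
  refine ⟨fun e => Real.exp (θ e), fun e => Real.exp_pos _, ?_⟩
  have hprod (T : Finset (Sym2 V)) : Real.exp (indVec T ⬝ᵥ θ) = ∏ t ∈ T, Real.exp (θ t) := by
    simp [dotProduct, indVec, Real.exp_sum]
  rw [← Finset.sum_coe_sort, ← hθ]
  simp only [hprod]
  exact Finset.sum_coe_sort _ fun T => (∏ t ∈ T, Real.exp (θ t)) • indVec T

lemma relRes_eq_sum_smul_indVec_div (c : Sym2 V → ℝ) (e : Sym2 V) :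
    relRes G c e = (∑ T ∈ spanningTrees G, (∏ t ∈ T, c t) • indVec T) e /
      ∑ T ∈ spanningTrees G, ∏ t ∈ T, c t := by
  simp [relRes, Finset.sum_filter, indVec]

lemma degreeExcess_indVec [Nontrivial V] {T : Finset (Sym2 V)} (hT : IsSpanningTree G T) (v : V) :
    degreeExcess G v (indVec T) = (T.filter fun e => v ∈ e).card - 2 := by
  rw [degreeExcess_apply, sum_neighborFinset_indVec hT.1, hT.sum_indVec,
    div_mul_cancel₀ _ card_sub_one_pos.ne']

lemma IsHamPath.degreeExcess_indVec_nonpos [Nontrivial V] {T : Finset (Sym2 V)}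
    (hT : IsHamPath G T) (v : V) : degreeExcess G v (indVec T) ≤ 0 := by
  rw [degreeExcess_indVec hT.1]
  exact sub_nonpos.mpr (by exact_mod_cast hT.2 v)

lemma degreeExcess_sum_smul_indVec [Nontrivial V] (w : Finset (Sym2 V) → ℝ) (v : V) :
    degreeExcess G v (∑ T ∈ spanningTrees G, w T • indVec T) =
      ∑ u ∈ G.neighborFinset v, (∑ T ∈ spanningTrees G, w T • indVec T) s(u, v) -
        2 * ∑ T ∈ spanningTrees G, w T := by
  have hmass : ∑ e, (∑ T ∈ spanningTrees G, w T • indVec T) e =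
      ((Fintype.card V : ℝ) - 1) * ∑ T ∈ spanningTrees G, w T := by
    simp only [Finset.sum_apply, Pi.smul_apply, smul_eq_mul, Finset.mul_sum]
    rw [Finset.sum_comm]
    refine Finset.sum_congr rfl fun T hT => ?_
    rw [← Finset.mul_sum, (mem_spanningTrees.mp hT).sum_indVec, mul_comm]
  rw [degreeExcess_apply, hmass, ← mul_assoc, div_mul_cancel₀ _ card_sub_one_pos.ne']

lemma isRN_of_mem_treeCone [Nontrivial V] {x : Sym2 V → ℝ} (hx : x ∈ treeCone G)
    (hdeg : ∀ v, degreeExcess G v x ≤ 0) : IsRN G := by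
  obtain ⟨c, hc, rfl⟩ := exists_pos_eq_sum_prod_smul_indVec hx
  refine ⟨c, fun e _ => hc e, fun v => ?_⟩
  have hmass : 0 ≤ ∑ T ∈ spanningTrees G, ∏ t ∈ T, c t :=
    Finset.sum_nonneg fun T _ => Finset.prod_nonneg fun t _ => (hc t).le
  have hsum : ∑ u ∈ G.neighborFinset v, relRes G c s(u, v) ≤ 2 := by
    simp only [relRes_eq_sum_smul_indVec_div]
    rw [← Finset.sum_div]
    refine div_le_of_le_mul₀ hmass zero_le_two (sub_nonpos.mp ?_)
    exact (degreeExcess_sum_smul_indVec _ v).symm.trans_le (hdeg v)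
  rw [curv]
  linarith

lemma exists_degreeExcess_indVec_neg [Nontrivial V] (hG : G.Connected) {v : V}
    (hv : (G.induce ({v}ᶜ : Set V)).Connected) :
    ∃ T, IsSpanningTree G T ∧ degreeExcess G v (indVec T) < 0 := by
  obtain ⟨w, hvw⟩ := hG.preconnected.exists_adj_of_nontrivial v
  obtain ⟨T, hT, hleaf⟩ := exists_isSpanningTree_card_filter_le_one hvw hv
  refine ⟨T, hT, ?_⟩
  have hleaf' : ((T.filter fun e => v ∈ e).card : ℝ) ≤ 1 := by exact_mod_cast hleaf
  rw [degreeExcess_indVec hT]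
  linarith

section HamPaths

variable {ι : Type*} {f : ι → Finset (Sym2 V)}

lemma exists_mem_treeCone_degreeExcess_nonpos_of_eq_zero [Fintype ι]
    (hf : ∀ i, IsSpanningTree G (f i)) (hind : LinearIndependent ℝ fun i => indVec (f i))
    (hcard : G.edgeFinset.card ≤ Fintype.card ι + 1)
    (hneg : ∀ v, ∃ T, IsSpanningTree G T ∧ degreeExcess G v (indVec T) < 0) :
    ∃ x ∈ treeCone G, ∀ v, (∀ i, degreeExcess G v (indVec (f i)) = 0) → degreeExcess G v x ≤ 0 := by
  by_contra! hpos
  set x := ∑ T ∈ spanningTrees G, indVec T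
  obtain ⟨v, hv, hxv⟩ := hpos x sum_indVec_mem_treeCone
  obtain ⟨T, hT, hTv⟩ := hneg v
  set t := degreeExcess G v x / -degreeExcess G v (indVec T)
  have hyC : x + t • indVec T ∈ treeCone G :=
    add_smul_indVec_mem_treeCone sum_indVec_mem_treeCone (div_pos hxv (neg_pos.mpr hTv)).le hT
  have hyv : degreeExcess G v (x + t • indVec T) = 0 := by
    have := hTv.ne
    simp only [map_add, map_smul, smul_eq_mul, t]
    field_simp
    ring
  obtain ⟨u, hu, hyu⟩ := hpos _ hyC
  have hker := inf_ker_le_ker_of_finrank_le hind (fun i => indVec_mem_edgeSpace (hf i).1)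
    (finrank_edgeSpace_le.trans hcard) hv hu (indVec_mem_edgeSpace hT.1) hTv.ne
  exact hyu.ne' (hker ⟨treeCone_subset_edgeSpace hyC, hyv⟩)

lemma exists_mem_treeCone_forall_degreeExcess_nonpos [Finite ι] [Nontrivial V]
    (hf : ∀ i, IsHamPath G (f i)) {x : Sym2 V → ℝ} (hx : x ∈ treeCone G)
    (hxf : ∀ v, (∀ i, degreeExcess G v (indVec (f i)) = 0) → degreeExcess G v x ≤ 0) :
    ∃ y ∈ treeCone G, ∀ v, degreeExcess G v y ≤ 0 := by
  have := Fintype.ofFinite ι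
  have hnonpos (v : V) (i : ι) : degreeExcess G v (indVec (f i)) ≤ 0 :=
    (hf i).degreeExcess_indVec_nonpos v
  have hzero (v : V) (hv : ∑ i, degreeExcess G v (indVec (f i)) = 0) : degreeExcess G v x ≤ 0 :=
    hxf v fun i => (Finset.sum_eq_zero_iff_of_nonpos fun i _ => hnonpos v i).mp hv i
      (Finset.mem_univ i)
  obtain ⟨t, ht, hle⟩ := exists_nonneg_forall_add_mul_nonpos
    (fun v => Finset.sum_nonpos fun i _ => hnonpos v i) hzero
  refine ⟨x + t • ∑ i, indVec (f i),
    add_smul_sum_indVec_mem_treeCone hx ht (fun i => (hf i).1) _, fun v => ?_⟩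
  simpa only [map_add, map_smul, map_sum, smul_eq_mul] using hle v

end HamPaths

end RCurv

open RCurv in
/-- If a biconnected graph contains `|E| - 1` Hamiltonian paths whose indicator vectors are
affinely independent, then it is resistance nonnegative. -/
theorem isRN_of_affineIndependent_hamPaths {V : Type*} [Fintype V] [DecidableEq V]
    (G : SimpleGraph V) (hG : G.Connected)
    (hbi : ∀ v : V, (G.induce ({v}ᶜ : Set V)).Connected)
    (f : Fin (G.edgeFinset.card - 1) → Finset (Sym2 V))
    (hf : ∀ i, IsHamPath G (f i))
    (hind : AffineIndependent ℝ fun i => indVec (f i)) :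
    IsRN G := by
  have : Nontrivial V := by
    obtain ⟨v⟩ := hG.nonempty
    obtain ⟨u, hu⟩ := (hbi v).nonempty
    exact ⟨u, v, hu⟩
  have hlin := linearIndependent_indVec (fun i => (hf i).1) hind
  obtain ⟨x, hx, hxf⟩ := exists_mem_treeCone_degreeExcess_nonpos_of_eq_zero (fun i => (hf i).1) hlin
    (by rw [Fintype.card_fin]; omega) fun v => exists_degreeExcess_indVec_neg hG (hbi v)
  obtain ⟨y, hy, hyv⟩ := exists_mem_treeCone_forall_degreeExcess_nonpos hf hx hxf
  exact isRN_of_mem_treeCone hy hyv
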